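/- (Parallelogram inequality) Let f : ℤⁿ → ℝ ∪ {+∞} be a globally or locally discrete midpoint convex function, let x ∈ dom f, and let A_1 ⊆ A_2 ⊆ … ⊆ A_m and B_1 ⊇ B_2 ⊇ … ⊇ B_m be subsets of {1,…,n} with A_m ∩ B_1 = ∅ and A_1 ∪ B_m ≠ ∅. Then for every bipartition (I, J) of {1,…,m} (I ∩ J = ∅, I ∪ J = {1,…,m}), setting d₁ = Σ_{i∈I} (1_{A_i} − 1_{B_i}) and d₂ = Σ_{j∈J} (1_{A_j} − 1_{B_j}), one has f(x) + f(x + d₁ + d₂) ≥ f(x + d₁) + f(x + d₂). -/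

import Mathlib

/-- The ℓ∞-norm of an integer vector, as a natural number. -/
def linf {n : ℕ} (z : Fin n → ℤ) : ℕ :=
  Finset.univ.sup fun i => (z i).natAbs

/-- Componentwise round-up of (x+y)/2. -/
def avgUp {n : ℕ} (x y : Fin n → ℤ) : Fin n → ℤ :=
  fun i => ⌈((x i + y i : ℚ)) / 2⌉

/-- Componentwise round-down of (x+y)/2. -/
def avgDown {n : ℕ} (x y : Fin n → ℤ) : Fin n → ℤ :=
  fun i => ⌊((x i + y i : ℚ)) / 2⌋

/-- A set `S ⊆ ℤⁿ` is discrete midpoint convex. -/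
def DMCSet {n : ℕ} (S : Set (Fin n → ℤ)) : Prop :=
  ∀ ⦃x⦄, x ∈ S → ∀ ⦃y⦄, y ∈ S → 2 ≤ linf (x - y) →
    avgUp x y ∈ S ∧ avgDown x y ∈ S

/-- `f` satisfies discrete midpoint convexity for the pair `(x, y)`.
Values are in `ℝ ∪ {+∞}`, modeled as `WithTop ℝ`. -/
def DMCPair {n : ℕ} (f : (Fin n → ℤ) → WithTop ℝ) (x y : Fin n → ℤ) : Prop :=
  f (avgUp x y) + f (avgDown x y) ≤ f x + f y

/-- `f` is globally discrete midpoint convex. -/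
def GloballyDMC {n : ℕ} (f : (Fin n → ℤ) → WithTop ℝ) : Prop :=
  ∀ x y : Fin n → ℤ, 2 ≤ linf (x - y) → DMCPair f x y

/-- The effective domain of `f`. -/
def effDom {n : ℕ} (f : (Fin n → ℤ) → WithTop ℝ) : Set (Fin n → ℤ) :=
  {x | f x ≠ ⊤}

/-- `f` is locally discrete midpoint convex. -/
def LocallyDMC {n : ℕ} (f : (Fin n → ℤ) → WithTop ℝ) : Prop :=
  DMCSet (effDom f) ∧ ∀ x y : Fin n → ℤ, linf (x - y) = 2 → DMCPair f x y

/-- The characteristic (0/1) integer vector of a subset `A ⊆ {1,…,n}`. -/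
def chi {n : ℕ} (A : Finset (Fin n)) : Fin n → ℤ :=
  fun i => if i ∈ A then 1 else 0

theorem avgUp_apply {n : ℕ} (x y : Fin n → ℤ) (i : Fin n) :
    avgUp x y i = (x i + y i + 1) / 2 := by
  unfold avgUp
  have h₁ : 2 * ((x i + y i + 1) / 2) - 2 < x i + y i := by omega
  have h₂ : x i + y i ≤ 2 * ((x i + y i + 1) / 2) := by omega
  generalize (x i + y i + 1) / 2 = q at *
  rw [Int.ceil_eq_iff]
  have h₁' : 2 * (q : ℚ) - 2 < x i + y i := by exact_mod_cast h₁
  have h₂' : (x i + y i : ℚ) ≤ 2 * q := by exact_mod_cast h₂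
  constructor <;> linarith

theorem avgDown_apply {n : ℕ} (x y : Fin n → ℤ) (i : Fin n) :
    avgDown x y i = (x i + y i) / 2 := by
  unfold avgDown
  have h₁ : 2 * ((x i + y i) / 2) ≤ x i + y i := by omega
  have h₂ : x i + y i < 2 * ((x i + y i) / 2) + 2 := by omega
  generalize (x i + y i) / 2 = q at *
  rw [Int.floor_eq_iff]
  have h₁' : 2 * (q : ℚ) ≤ x i + y i := by exact_mod_cast h₁
  have h₂' : (x i + y i : ℚ) < 2 * q + 2 := by exact_mod_cast h₂
  constructor <;> linarith

/-- If `d ≤ e ≤ d + 1`, the rounded midpoints of `x` and `x + d + e` are `x + e` and `x + d`. -/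
theorem avg_eq_of_close {n : ℕ} {x y d e : Fin n → ℤ} (hy : y = x + d + e)
    (h : ∀ i, d i ≤ e i ∧ e i ≤ d i + 1) : avgUp x y = x + e ∧ avgDown x y = x + d := by
  subst hy
  constructor <;> ext i <;> have := h i <;>
    simp only [avgUp_apply, avgDown_apply, Pi.add_apply] <;> omega

theorem le_linf_sub {n : ℕ} {x y : Fin n → ℤ} {k : ℕ} (i : Fin n)
    (h : (k : ℤ) ≤ y i - x i ∨ y i - x i ≤ -k) : k ≤ linf (x - y) := by
  refine le_trans ?_ (Finset.le_sup (f := fun i => ((x - y) i).natAbs) (Finset.mem_univ i))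
  simp only [Pi.sub_apply]
  omega

/-- The steps `v k`, `k ∈ K`, are `{-1, 0, 1}`-vectors, increase with `k`, do not change sign in
any coordinate, and have a common coordinate that is constantly `1` or constantly `-1`. -/
structure StepChain {n : ℕ} (K : Finset ℕ) (v : ℕ → Fin n → ℤ) : Prop where
  mono : ∀ i, ∀ j ∈ K, ∀ k ∈ K, j ≤ k → v j i ≤ v k i
  bound : ∀ i, ∀ k ∈ K, -1 ≤ v k i ∧ v k i ≤ 1
  sign : ∀ i, (∀ k ∈ K, 0 ≤ v k i) ∨ (∀ k ∈ K, v k i ≤ 0)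
  full : ∃ i, (∀ k ∈ K, v k i = 1) ∨ (∀ k ∈ K, v k i = -1)

namespace StepChain

variable {n : ℕ} {K L : Finset ℕ} {v : ℕ → Fin n → ℤ}

theorem subset (h : StepChain K v) (hL : L ⊆ K) : StepChain L v where
  mono i j hj k hk := h.mono i j (hL hj) k (hL hk)
  bound i k hk := h.bound i k (hL hk)
  sign i := (h.sign i).imp (fun H k hk => H k (hL hk)) (fun H k hk => H k (hL hk))
  full := h.full.imp fun _ H =>
    H.imp (fun H k hk => H k (hL hk)) (fun H k hk => H k (hL hk))

theorem comp {σ : ℕ → ℕ} (h : StepChain K v) (hσ : ∀ j ∈ L, σ j ∈ K)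
    (hmono : ∀ j ∈ L, ∀ k ∈ L, j ≤ k → σ j ≤ σ k) : StepChain L (v ∘ σ) where
  mono i j hj k hk hjk := h.mono i _ (hσ j hj) _ (hσ k hk) (hmono j hj k hk hjk)
  bound i k hk := h.bound i _ (hσ k hk)
  sign i := (h.sign i).imp (fun H k hk => H _ (hσ k hk)) (fun H k hk => H _ (hσ k hk))
  full := h.full.imp fun _ H =>
    H.imp (fun H k hk => H _ (hσ k hk)) (fun H k hk => H _ (hσ k hk))

/-- The chain traversed backwards. -/
theorem reverse {m : ℕ} (h : StepChain (Finset.range m) v) :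
    StepChain (Finset.range m) (fun k => -v (m - 1 - k)) := by
  have hmem : ∀ k ∈ Finset.range m, m - 1 - k ∈ Finset.range m := by
    intro k hk; simp only [Finset.mem_range] at *; omega
  refine ⟨fun i j hj k hk hjk => ?_, fun i k hk => ?_, fun i => ?_, ?_⟩
  · have := h.mono i _ (hmem k hk) _ (hmem j hj) (by omega)
    simp only [Pi.neg_apply]; omega
  · have := h.bound i _ (hmem k hk)
    simp only [Pi.neg_apply]; omega
  · refine (h.sign i).symm.imp (fun H k hk => ?_) (fun H k hk => ?_) <;>
    · have := H _ (hmem k hk)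
      simp only [Pi.neg_apply]; omega
  · obtain ⟨i, hi⟩ := h.full
    refine ⟨i, hi.symm.imp (fun H k hk => ?_) (fun H k hk => ?_)⟩ <;>
    · have := H _ (hmem k hk)
      simp only [Pi.neg_apply]; omega

theorem two_le_linf (h : StepChain K v) (hK : 2 ≤ K.card) (x : Fin n → ℤ) :
    2 ≤ linf (x - (x + ∑ k ∈ K, v k)) := by
  obtain ⟨i, hi⟩ := h.full
  refine le_linf_sub i ?_
  simp only [Pi.add_apply, Finset.sum_apply, add_sub_cancel_left]
  refine hi.imp (fun H => ?_) (fun H => ?_) <;> rw [Finset.sum_congr rfl H] <;> simp <;> omega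

end StepChain

/-- Partial sums of the chain between two points of `S` stay in `S`; the chain has `m` steps. -/
def ClosedUnderChains {n : ℕ} (S : Set (Fin n → ℤ)) (m : ℕ) : Prop :=
  ∀ (x : Fin n → ℤ) (v : ℕ → Fin n → ℤ), StepChain (Finset.range m) v → x ∈ S →
    x + ∑ k ∈ Finset.range m, v k ∈ S →
    ∀ L ⊆ Finset.range m, x + ∑ k ∈ L, v k ∈ S

theorem exists_monotone_enumeration (K : Finset ℕ) :
    ∃ σ : ℕ → ℕ, StrictMonoOn σ (Finset.range K.card) ∧
      (Finset.range K.card).image σ = K := by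
  have hf : {k | k ∈ K}.Finite := K.finite_toSet
  have hK : hf.toFinset = K := by ext; simp
  refine ⟨Nat.nth (· ∈ K), ?_, ?_⟩
  · have := Nat.nth_strictMonoOn hf
    rw [hK] at this
    simpa using this
  · have := Nat.image_nth_Iio_card hf
    rw [hK] at this
    apply Finset.coe_injective
    rw [Finset.coe_image, Finset.coe_range, this]
    rfl

theorem ClosedUnderChains.finset {n : ℕ} {S : Set (Fin n → ℤ)} {K L : Finset ℕ}
    (hS : ClosedUnderChains S K.card) {x : Fin n → ℤ} {v : ℕ → Fin n → ℤ} (hv : StepChain K v)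
    (hx : x ∈ S) (hy : x + ∑ k ∈ K, v k ∈ S) (hL : L ⊆ K) : x + ∑ k ∈ L, v k ∈ S := by
  obtain ⟨σ, hσ, hσK⟩ := exists_monotone_enumeration K
  have hmem : ∀ j ∈ Finset.range K.card, σ j ∈ K := fun j hj =>
    hσK ▸ Finset.mem_image_of_mem σ hj
  obtain ⟨L', hL', rfl⟩ : ∃ L' ⊆ Finset.range K.card, L'.image σ = L := by
    rw [← hσK] at hL
    obtain ⟨L', h, rfl⟩ := Finset.subset_image_iff.1 hL
    exact ⟨L', h, rfl⟩
  rw [Finset.sum_image (hσ.injOn.mono (by exact_mod_cast hL'))]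
  refine hS x (v ∘ σ) (hv.comp hmem fun j hj k hk hjk => hσ.monotoneOn (by exact_mod_cast hj)
    (by exact_mod_cast hk) hjk) hx ?_ L' hL'
  rw [← hσK, Finset.sum_image hσ.injOn] at hy
  exact hy

/-- Between two sets `K ⊆ L` of steps. -/
theorem ClosedUnderChains.interval {n : ℕ} {S : Set (Fin n → ℤ)} {K L M : Finset ℕ}
    (hS : ClosedUnderChains S (L \ K).card) {x : Fin n → ℤ} {v : ℕ → Fin n → ℤ}
    (hv : StepChain L v) (hKM : K ⊆ M) (hML : M ⊆ L)
    (hK : x + ∑ k ∈ K, v k ∈ S) (hL : x + ∑ k ∈ L, v k ∈ S) :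
    x + ∑ k ∈ M, v k ∈ S := by
  have hsum : ∀ N, K ⊆ N → x + ∑ k ∈ N, v k = (x + ∑ k ∈ K, v k) + ∑ k ∈ N \ K, v k := by
    intro N hN
    rw [← Finset.sum_sdiff hN]; abel
  rw [hsum M hKM]
  rw [hsum L (hKM.trans hML)] at hL
  exact hS.finset (hv.subset Finset.sdiff_subset) hK hL (Finset.sdiff_subset_sdiff hML subset_rfl)

theorem sum_range_two_mul_eq {M : Type*} [AddCommMonoid M] (g : ℕ → M) (r : ℕ) :
    ∑ k ∈ Finset.range (2 * r), g k =
      ∑ j ∈ Finset.range r, g (2 * j) + ∑ j ∈ Finset.range r, g (2 * j + 1) := by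
  induction r with
  | zero => simp
  | succ r ih =>
    rw [Nat.mul_succ, Finset.sum_range_succ, Finset.sum_range_succ, ih, Finset.sum_range_succ,
      Finset.sum_range_succ]
    abel

theorem sum_range_skip {M : Type*} [AddCommMonoid M] (g : ℕ → M) {m i : ℕ} (hi : i ≤ m) :
    ∑ k ∈ Finset.range m, g (if k < i then k else k + 1) + g i =
      ∑ k ∈ Finset.range (m + 1), g k := by
  induction m with
  | zero => simp [Nat.le_zero.1 hi]
  | succ m ih =>
    rcases hi.lt_or_eq with h | rfl
    · rw [Finset.sum_range_succ, Finset.sum_range_succ _ (m + 1), ← ih (by omega),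
        if_neg (by omega)]
      abel
    · rw [Finset.sum_range_succ _ (m + 1)]
      congr 1
      exact Finset.sum_congr rfl fun k hk => by rw [if_pos (Finset.mem_range.1 hk)]

theorem alternating_even_bounds (c : ℕ → ℤ) (r : ℕ)
    (hc : ∀ k, k + 1 < 2 * (r + 1) → c k ≤ c (k + 1)) :
    ∑ j ∈ Finset.range (r + 1), c (2 * j) ≤ ∑ j ∈ Finset.range (r + 1), c (2 * j + 1) ∧
    ∑ j ∈ Finset.range (r + 1), c (2 * j + 1) ≤
      ∑ j ∈ Finset.range (r + 1), c (2 * j) + (c (2 * r + 1) - c 0) := by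
  induction r with
  | zero => simpa using hc 0 (by omega)
  | succ r ih =>
    have ih := ih fun k hk => hc k (by omega)
    have h₁ := hc (2 * r + 1) (by omega)
    have h₂ := hc (2 * r + 2) (by omega)
    rw [Finset.sum_range_succ _ (r + 1), Finset.sum_range_succ _ (r + 1),
      show 2 * (r + 1) = 2 * r + 2 by ring]
    constructor <;> linarith [ih.1, ih.2]

theorem alternating_odd_bounds (c : ℕ → ℤ) (r : ℕ)
    (hc : ∀ k, k + 1 < 2 * r + 1 → c k ≤ c (k + 1)) :
    ∑ j ∈ Finset.range r, c (2 * j + 1) + c 0 ≤ ∑ j ∈ Finset.range (r + 1), c (2 * j) ∧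
    ∑ j ∈ Finset.range (r + 1), c (2 * j) ≤
      ∑ j ∈ Finset.range r, c (2 * j + 1) + c (2 * r) := by
  induction r with
  | zero => simp
  | succ r ih =>
    have ih := ih fun k hk => hc k (by omega)
    have h₁ := hc (2 * r + 1) (by omega)
    have h₂ := hc (2 * r) (by omega)
    rw [Finset.sum_range_succ _ (r + 1), Finset.sum_range_succ _ r,
      show 2 * (r + 1) = 2 * r + 2 by ring]
    constructor <;> linarith [ih.1, ih.2]

/-- The odd and the even steps of a chain of even length lead to points of `S`. -/
theorem DMCSet.even_chain {n : ℕ} {S : Set (Fin n → ℤ)} (hS : DMCSet S) {r : ℕ}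
    {x : Fin n → ℤ} {v : ℕ → Fin n → ℤ} (hv : StepChain (Finset.range (2 * (r + 1))) v)
    (hx : x ∈ S) (hy : x + ∑ k ∈ Finset.range (2 * (r + 1)), v k ∈ S) :
    x + ∑ j ∈ Finset.range (r + 1), v (2 * j + 1) ∈ S ∧
      x + ∑ j ∈ Finset.range (r + 1), v (2 * j) ∈ S := by
  have hd := hv.two_le_linf (by simp only [Finset.card_range]; omega) x
  have hclose := avg_eq_of_close (x := x) (d := ∑ j ∈ Finset.range (r + 1), v (2 * j))
    (e := ∑ j ∈ Finset.range (r + 1), v (2 * j + 1))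
    (y := x + ∑ k ∈ Finset.range (2 * (r + 1)), v k)
    (by rw [sum_range_two_mul_eq, add_assoc]) (fun i => by
      have h := alternating_even_bounds (fun k => v k i) r fun k hk =>
        hv.mono i k (Finset.mem_range.2 (by omega)) _ (Finset.mem_range.2 hk) (by omega)
      have h₀ : 0 ∈ Finset.range (2 * (r + 1)) := Finset.mem_range.2 (by omega)
      have h₁ : 2 * r + 1 ∈ Finset.range (2 * (r + 1)) := Finset.mem_range.2 (by omega)
      have b₀ := hv.bound i _ h₀
      have b₁ := hv.bound i _ h₁
      simp only [Finset.sum_apply]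
      refine ⟨h.1, h.2.trans ?_⟩
      rcases hv.sign i with hs | hs
      · have := hs _ h₀; omega
      · have := hs _ h₁; omega)
  rw [← hclose.1, ← hclose.2]
  exact hS hx hy hd

/-- In a chain of odd length with a coordinate constantly equal to `-1`, the first step leads to
a point of `S`. -/
theorem DMCSet.odd_chain_of_neg {n : ℕ} {S : Set (Fin n → ℤ)} (hS : DMCSet S) {r : ℕ}
    (ih : ∀ m < 2 * (r + 1) + 1, ClosedUnderChains S m)
    {x : Fin n → ℤ} {v : ℕ → Fin n → ℤ} (hv : StepChain (Finset.range (2 * (r + 1) + 1)) v)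
    {i₀ : Fin n} (hneg : ∀ k ∈ Finset.range (2 * (r + 1) + 1), v k i₀ = -1)
    (hx : x ∈ S) (hy : x + ∑ k ∈ Finset.range (2 * (r + 1) + 1), v k ∈ S) :
    x + v 0 ∈ S := by
  have hd := hv.two_le_linf (by simp only [Finset.card_range]; omega) x
  set y := x + ∑ k ∈ Finset.range (2 * (r + 1) + 1), v k with hydef
  have hsplit : ∀ k, v k = v k ⊔ 0 + v k ⊓ 0 := fun k => by
    ext i; simp only [Pi.add_apply, Pi.sup_apply, Pi.inf_apply, Pi.zero_apply]; omega
  have hyu : y = x + (∑ j ∈ Finset.range (r + 2), v (2 * j) ⊓ 0 +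
        ∑ j ∈ Finset.range (r + 1), v (2 * j + 1) ⊔ 0) +
      (∑ j ∈ Finset.range (r + 2), v (2 * j) ⊔ 0 +
        ∑ j ∈ Finset.range (r + 1), v (2 * j + 1) ⊓ 0) := by
    have h₁ : ∑ j ∈ Finset.range (r + 2), v (2 * j) =
        ∑ j ∈ Finset.range (r + 2), v (2 * j) ⊔ 0 + ∑ j ∈ Finset.range (r + 2), v (2 * j) ⊓ 0 := by
      rw [← Finset.sum_add_distrib]; exact Finset.sum_congr rfl fun j _ => hsplit _
    have h₂ : ∑ j ∈ Finset.range (r + 1), v (2 * j + 1) =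
        ∑ j ∈ Finset.range (r + 1), v (2 * j + 1) ⊔ 0 +
          ∑ j ∈ Finset.range (r + 1), v (2 * j + 1) ⊓ 0 := by
      rw [← Finset.sum_add_distrib]; exact Finset.sum_congr rfl fun j _ => hsplit _
    rw [hydef, Finset.sum_range_succ, sum_range_two_mul_eq, add_right_comm (∑ j ∈ _, _),
      ← Finset.sum_range_succ (fun j => v (2 * j)), h₁, h₂]
    abel
  have hclose := avg_eq_of_close hyu (fun i => by
    have h₀ : 0 ∈ Finset.range (2 * (r + 1) + 1) := Finset.mem_range.2 (by omega)
    have h₁ : 2 * (r + 1) ∈ Finset.range (2 * (r + 1) + 1) := Finset.mem_range.2 (by omega)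
    have b₀ := hv.bound i _ h₀
    have b₁ := hv.bound i _ h₁
    have h := alternating_odd_bounds (fun k => v k i) (r + 1) fun k hk =>
      hv.mono i k (Finset.mem_range.2 (by omega)) _ (Finset.mem_range.2 hk) (by omega)
    simp only [Pi.add_apply, Finset.sum_apply, Pi.sup_apply, Pi.inf_apply, Pi.zero_apply]
    have mem₁ : ∀ j ∈ Finset.range (r + 2), 2 * j ∈ Finset.range (2 * (r + 1) + 1) :=
      fun j hj => by simp only [Finset.mem_range] at *; omega
    have mem₂ : ∀ j ∈ Finset.range (r + 1), 2 * j + 1 ∈ Finset.range (2 * (r + 1) + 1) :=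
      fun j hj => by simp only [Finset.mem_range] at *; omega
    rcases hv.sign i with hs | hs
    · rw [Finset.sum_congr rfl fun j hj => inf_eq_right.2 (hs _ (mem₁ j hj)),
        Finset.sum_congr rfl fun j hj => inf_eq_right.2 (hs _ (mem₂ j hj)),
        Finset.sum_congr rfl fun j hj => sup_eq_left.2 (hs _ (mem₁ j hj)),
        Finset.sum_congr rfl fun j hj => sup_eq_left.2 (hs _ (mem₂ j hj))]
      have := hs _ h₀
      simp only [Finset.sum_const_zero, zero_add, add_zero]
      constructor <;> linarith [h.1, h.2]
    · rw [Finset.sum_congr rfl fun j hj => inf_eq_left.2 (hs _ (mem₁ j hj)),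
        Finset.sum_congr rfl fun j hj => inf_eq_left.2 (hs _ (mem₂ j hj)),
        Finset.sum_congr rfl fun j hj => sup_eq_right.2 (hs _ (mem₁ j hj)),
        Finset.sum_congr rfl fun j hj => sup_eq_right.2 (hs _ (mem₂ j hj))]
      have := hs _ h₁
      simp only [Finset.sum_const_zero, zero_add, add_zero]
      constructor <;> linarith [h.1, h.2])
  have hu := (hS hx hy hd).1
  rw [hclose.1] at hu
  set u := x + (∑ j ∈ Finset.range (r + 2), v (2 * j) ⊔ 0 +
        ∑ j ∈ Finset.range (r + 1), v (2 * j + 1) ⊓ 0) with hudef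
  -- the chain from the rounded-up midpoint `u` to `y`
  let w : ℕ → Fin n → ℤ := fun j => v (2 * j) ⊓ 0 + if j = 0 then 0 else v (2 * j - 1) ⊔ 0
  have hw : StepChain (Finset.range (r + 2)) w := by
    have mem₁ : ∀ j ∈ Finset.range (r + 2), 2 * j ∈ Finset.range (2 * (r + 1) + 1) :=
      fun j hj => by simp only [Finset.mem_range] at *; omega
    have mem₂ : ∀ j ∈ Finset.range (r + 2), 2 * j - 1 ∈ Finset.range (2 * (r + 1) + 1) :=
      fun j hj => by simp only [Finset.mem_range] at *; omega
    have hwi : ∀ j i, w j i = min (v (2 * j) i) 0 + if j = 0 then 0 else max (v (2 * j - 1) i) 0 := by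
      intro j i; by_cases hj : j = 0 <;> simp [w, hj]
    refine ⟨fun i j hj k hk hjk => ?_, fun i k hk => ?_, fun i => ?_, i₀, Or.inr fun k hk => ?_⟩
    · have h₁ := hv.mono i _ (mem₁ j hj) _ (mem₁ k hk) (by omega)
      have h₂ := hv.mono i _ (mem₂ j hj) _ (mem₂ k hk) (by omega)
      rw [hwi, hwi]
      split_ifs <;> omega
    · have h₁ := hv.bound i _ (mem₁ k hk)
      have h₂ := hv.bound i _ (mem₂ k hk)
      rw [hwi]
      rcases hv.sign i with hs | hs <;> have s₁ := hs _ (mem₁ k hk) <;>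
        have s₂ := hs _ (mem₂ k hk) <;> split_ifs <;> omega
    · refine (hv.sign i).imp (fun hs k hk => ?_) (fun hs k hk => ?_) <;>
        have s₁ := hs _ (mem₁ k hk) <;> have s₂ := hs _ (mem₂ k hk) <;> rw [hwi] <;>
        split_ifs <;> omega
    · rw [hwi, hneg _ (mem₁ k hk), hneg _ (mem₂ k hk)]
      split_ifs <;> simp
  have hwsum : ∑ j ∈ Finset.range (r + 2), w j = ∑ j ∈ Finset.range (r + 2), v (2 * j) ⊓ 0 +
        ∑ j ∈ Finset.range (r + 1), v (2 * j + 1) ⊔ 0 := by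
    simp only [w, Finset.sum_add_distrib]
    rw [Finset.sum_range_succ' (fun j => if j = 0 then (0 : Fin n → ℤ) else _) (r + 1)]
    simp [Nat.mul_succ]
  have hyw : y = u + ∑ j ∈ Finset.range (r + 2), w j := by rw [hwsum, hyu, hudef]; abel
  have h1mem : 1 ∈ Finset.range (r + 2) := Finset.mem_range.2 (by omega)
  have hz := ih (r + 2) (by omega) u w hw hu (hyw ▸ hy) _ (Finset.erase_subset 1 _)
  -- the chain from `x` to `y - w 1`
  let s : ℕ → ℕ → ℕ := fun i k => if k < i then k else k + 1
  let z : ℕ → Fin n → ℤ := fun k => v (s 1 k) ⊔ 0 + v (s 2 k) ⊓ 0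
  have hzc : StepChain (Finset.range (2 * (r + 1))) z := by
    have mem : ∀ i, ∀ j ∈ Finset.range (2 * (r + 1)), s i j ∈ Finset.range (2 * (r + 1) + 1) :=
      fun i j hj => by simp only [s, Finset.mem_range] at *; split_ifs <;> omega
    have smono : ∀ i j k, j ≤ k → s i j ≤ s i k := fun i j k h => by
      simp only [s]; split_ifs <;> omega
    have hzi : ∀ k i, z k i = max (v (s 1 k) i) 0 + min (v (s 2 k) i) 0 := fun _ _ => rfl
    refine ⟨fun i j hj k hk hjk => ?_, fun i k hk => ?_, fun i => ?_, i₀, Or.inr fun k hk => ?_⟩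
    · have h₁ := hv.mono i _ (mem 1 j hj) _ (mem 1 k hk) (smono _ _ _ hjk)
      have h₂ := hv.mono i _ (mem 2 j hj) _ (mem 2 k hk) (smono _ _ _ hjk)
      rw [hzi, hzi]
      omega
    · have h₁ := hv.bound i _ (mem 1 k hk)
      have h₂ := hv.bound i _ (mem 2 k hk)
      rw [hzi]
      rcases hv.sign i with hs | hs <;> have s₁ := hs _ (mem 1 k hk) <;>
        have s₂ := hs _ (mem 2 k hk) <;> omega
    · refine (hv.sign i).imp (fun hs k hk => ?_) (fun hs k hk => ?_) <;>
        have s₁ := hs _ (mem 1 k hk) <;> have s₂ := hs _ (mem 2 k hk) <;> rw [hzi] <;> omega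
    · rw [hzi, hneg _ (mem 1 k hk), hneg _ (mem 2 k hk)]
      simp
  have hzsum : x + ∑ k ∈ Finset.range (2 * (r + 1)), z k =
      u + ∑ j ∈ (Finset.range (r + 2)).erase 1, w j := by
    have h₁ := sum_range_skip (fun k => v k ⊔ 0) (m := 2 * (r + 1)) (i := 1) (by omega)
    have h₂ := sum_range_skip (fun k => v k ⊓ 0) (m := 2 * (r + 1)) (i := 2) (by omega)
    have h₃ := Finset.sum_erase_add _ w h1mem
    have hw1 : w 1 = v 2 ⊓ 0 + v 1 ⊔ 0 := by simp [w]
    have h₄ : ∑ k ∈ Finset.range (2 * (r + 1)), z k =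
        ∑ k ∈ Finset.range (2 * (r + 1)), v (s 1 k) ⊔ 0 +
          ∑ k ∈ Finset.range (2 * (r + 1)), v (s 2 k) ⊓ 0 := Finset.sum_add_distrib
    have h₅ : y = x + (∑ k ∈ Finset.range (2 * (r + 1) + 1), v k ⊔ 0 +
        ∑ k ∈ Finset.range (2 * (r + 1) + 1), v k ⊓ 0) := by
      rw [hydef, ← Finset.sum_add_distrib]
      congr 1
      exact Finset.sum_congr rfl fun k _ => hsplit k
    rw [← add_left_inj (w 1), add_assoc u, h₃, ← hyw, h₅, ← h₁, ← h₂, h₄, hw1]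
    abel
  have := ih (2 * (r + 1)) (by omega) x z hzc hx (hzsum ▸ hz) {0} (by simp)
  rw [Finset.sum_singleton] at this
  have hz0 : z 0 = v 0 := by simp only [z, s]; simpa using (hsplit 0).symm
  rwa [hz0] at this

/-- A nontrivial intermediate point of a chain lying in `S`. -/
theorem DMCSet.exists_intermediate {n : ℕ} {S : Set (Fin n → ℤ)} (hS : DMCSet S) {m : ℕ}
    (hm : 2 ≤ m) (ih : ∀ m' < m, ClosedUnderChains S m')
    {x : Fin n → ℤ} {v : ℕ → Fin n → ℤ} (hv : StepChain (Finset.range m) v)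
    (hx : x ∈ S) (hy : x + ∑ k ∈ Finset.range m, v k ∈ S) :
    ∃ K ⊂ Finset.range m, K.Nonempty ∧ x + ∑ k ∈ K, v k ∈ S := by
  rcases Nat.even_or_odd' m with ⟨r, rfl | rfl⟩
  · obtain ⟨r, rfl⟩ : ∃ q, r = q + 1 := ⟨r - 1, by omega⟩
    refine ⟨(Finset.range (r + 1)).image (2 * ·), ?_, by simp, ?_⟩
    · rw [Finset.ssubset_iff_of_subset]
      · exact ⟨1, Finset.mem_range.2 (by omega), by simp⟩
      · intro k
        simp only [Finset.mem_image, Finset.mem_range]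
        omega
    · rw [Finset.sum_image (fun a _ b _ h => by simpa using h)]
      exact (hS.even_chain hv hx hy).2
  · obtain ⟨r, rfl⟩ : ∃ q, r = q + 1 := ⟨r - 1, by omega⟩
    obtain ⟨i, hi | hi⟩ := hv.full
    · have hrev : ∑ k ∈ Finset.range (2 * (r + 1) + 1), -v (2 * (r + 1) + 1 - 1 - k) =
          -∑ k ∈ Finset.range (2 * (r + 1) + 1), v k := by
        rw [Finset.sum_neg_distrib, Finset.sum_range_reflect]
      have := hS.odd_chain_of_neg ih hv.reverse (i₀ := i) (fun k hk => by
        simp only [Pi.neg_apply]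
        rw [hi _ (by simp only [Finset.mem_range] at *; omega)]) hy
        (by rw [hrev, add_neg_cancel_right]; exact hx)
      refine ⟨Finset.range (2 * (r + 1)), ?_, by simp, ?_⟩
      · rw [Finset.ssubset_iff_of_subset (by simp)]
        exact ⟨2 * (r + 1), by simp, by simp⟩
      · convert this using 1
        rw [Finset.sum_range_succ]
        simp only [Nat.add_sub_cancel, Nat.sub_zero]
        abel
    · refine ⟨{0}, ?_, by simp, ?_⟩
      · rw [Finset.ssubset_iff_of_subset (by simp)]
        exact ⟨1, by simp, by simp⟩
      · rw [Finset.sum_singleton]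
        exact hS.odd_chain_of_neg ih hv hi hx hy

theorem DMCSet.closedUnderChains {n : ℕ} {S : Set (Fin n → ℤ)} (hS : DMCSet S) (m : ℕ) :
    ClosedUnderChains S m := by
  induction m using Nat.strong_induction_on with
  | _ m ih =>
  intro x v hv hx hy
  have hx' : x + ∑ k ∈ (∅ : Finset ℕ), v k ∈ S := by simpa using hx
  have step : ∀ {K L M : Finset ℕ}, K ⊆ M → M ⊆ L → L ⊆ Finset.range m → (L \ K).card < m →
      x + ∑ k ∈ K, v k ∈ S → x + ∑ k ∈ L, v k ∈ S → x + ∑ k ∈ M, v k ∈ S :=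
    fun hKM hML hL hc hK hL' => (ih _ hc).interval (hv.subset hL) hKM hML hK hL'
  have hlt : ∀ {M : Finset ℕ} {a : ℕ}, M ⊆ Finset.range m → a ∈ Finset.range m → a ∉ M →
      M.card < m := by
    intro M a hM ha haM
    have := Finset.card_lt_card ((Finset.ssubset_iff_of_subset hM).2 ⟨a, ha, haM⟩)
    simpa using this
  rcases lt_or_ge m 2 with hm | hm
  · intro L hL
    rcases Finset.eq_empty_or_nonempty L with rfl | ⟨a, ha⟩
    · exact hx'
    · have : L = Finset.range m := by
        refine Finset.eq_of_subset_of_card_le hL ?_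
        have := Finset.card_pos.2 ⟨a, ha⟩
        simp; omega
      rwa [this]
  rcases hm.eq_or_lt with rfl | hm'
  · intro L hL
    have hcases : ∀ L ∈ (Finset.range 2).powerset,
        L = ∅ ∨ L = {0} ∨ L = {1} ∨ L = Finset.range 2 := by decide
    have h := hS.even_chain (r := 0) hv hx hy
    simp only [zero_add, Finset.range_one, Finset.sum_singleton, mul_zero] at h
    rcases hcases L (Finset.mem_powerset.2 hL) with rfl | rfl | rfl | rfl
    · exact hx'
    · rw [Finset.sum_singleton]; exact h.2
    · rw [Finset.sum_singleton]; exact h.1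
    · exact hy
  obtain ⟨K, hK, ⟨a, ha⟩, hKS⟩ := hS.exists_intermediate hm ih hv hx hy
  obtain ⟨b, hb, hbK⟩ := Finset.exists_of_ssubset hK
  replace hK := hK.subset
  -- all sets of steps but the complement of `K`
  have main : ∀ L ⊆ Finset.range m, L ≠ Finset.range m \ K → x + ∑ k ∈ L, v k ∈ S := by
    intro L hL hne
    have hinf : x + ∑ k ∈ L ∩ K, v k ∈ S :=
      step (Finset.empty_subset _) Finset.inter_subset_right hK
        (by rw [Finset.sdiff_empty]; exact hlt hK hb hbK) hx' hKS
    have hsup : x + ∑ k ∈ L ∪ K, v k ∈ S :=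
      step (Finset.subset_union_right) (Finset.union_subset hL hK) subset_rfl
        (hlt Finset.sdiff_subset (hK ha) (by simp [ha])) hKS hy
    obtain ⟨c, hc, hcL⟩ : ∃ c ∈ Finset.range m, c ∉ (L ∪ K) \ (L ∩ K) := by
      by_contra! H
      apply hne
      ext c
      constructor
      · intro h
        have := H c (hL h)
        simp only [Finset.mem_sdiff, Finset.mem_union, Finset.mem_inter] at *
        exact ⟨hL h, by tauto⟩
      · intro h
        have := H c (Finset.mem_sdiff.1 h).1
        simp only [Finset.mem_sdiff, Finset.mem_union, Finset.mem_inter] at *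
        tauto
    exact step Finset.inter_subset_left Finset.subset_union_left (Finset.union_subset hL hK)
      (hlt (Finset.sdiff_subset.trans (Finset.union_subset hL hK)) hc hcL) hinf hsup
  intro L hL
  by_cases hne : L = Finset.range m \ K
  swap
  · exact main L hL hne
  · have haL : a ∉ L := by simp [hne, ha]
    have hbL : b ∈ L := by rw [hne]; exact Finset.mem_sdiff.2 ⟨hb, hbK⟩
    have hsub : insert a L ⊆ Finset.range m := Finset.insert_subset (hK ha) hL
    refine step (Finset.erase_subset b L) (Finset.subset_insert a L) hsub ?_
      (main _ ((Finset.erase_subset b L).trans hL) fun h => ?_) (main _ hsub fun h => ?_)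
    · refine lt_of_le_of_lt (Finset.card_le_card (t := {a, b}) ?_)
        (lt_of_le_of_lt Finset.card_le_two hm')
      intro c
      simp only [Finset.mem_sdiff, Finset.mem_insert, Finset.mem_erase, Finset.mem_singleton]
      tauto
    · rw [← hne] at h
      rw [← h] at hbL
      exact Finset.notMem_erase b L hbL
    · rw [← hne] at h
      exact haL (h ▸ Finset.mem_insert_self a L)

/-- Local supermodularity on the subsets of `U` gives supermodularity. -/
theorem supermodular_of_local {G : Finset ℕ → ℝ} {U : Finset ℕ}
    (hG : ∀ K ⊆ U, ∀ a ∈ U, ∀ b ∈ U, a ∉ K → b ∉ K → a ≠ b →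
      G (insert a K) + G (insert b K) ≤ G K + G (insert a (insert b K)))
    {I J : Finset ℕ} (hI : I ⊆ U) (hJ : J ⊆ U) (hIJ : Disjoint I J) :
    G I + G J ≤ G ∅ + G (I ∪ J) := by
  have key : ∀ a ∈ U, ∀ J : Finset ℕ, ∀ K ⊆ U, J ⊆ U → Disjoint K J → a ∉ K → a ∉ J →
      G (insert a K) + G (K ∪ J) ≤ G K + G (insert a (K ∪ J)) := by
    intro a ha J
    induction J using Finset.induction_on with
    | empty => intro K _ _ _ _ _; simp [add_comm]
    | insert b J hb ih =>
      intro K hK hJ hKJ haK haJ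
      rw [Finset.insert_subset_iff] at hJ
      rw [Finset.disjoint_insert_right] at hKJ
      rw [Finset.mem_insert, not_or] at haJ
      have h₁ := ih K hK hJ.2 hKJ.2 haK haJ.2
      have h₂ := hG (K ∪ J) (Finset.union_subset hK hJ.2) a ha b hJ.1
        (by simp [haK, haJ.2]) (by simp [hKJ.1, hb]) haJ.1
      rw [Finset.union_insert]
      linarith
  induction I using Finset.induction_on with
  | empty => simp [add_comm]
  | insert a I ha ih =>
    rw [Finset.insert_subset_iff] at hI
    rw [Finset.disjoint_insert_left] at hIJ
    have h₁ := ih hI.2 hIJ.2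
    have h₂ := key a hI.1 J I hI.2 hJ hIJ.2 ha hIJ.1
    rw [Finset.insert_union]
    linarith

theorem GloballyDMC.dmcSet_effDom {n : ℕ} {f : (Fin n → ℤ) → WithTop ℝ} (hf : GloballyDMC f) :
    DMCSet (effDom f) := by
  intro x hx y hy hxy
  have h := (hf x y hxy).trans_lt (WithTop.add_lt_top.2 ⟨hx.lt_top, hy.lt_top⟩)
  rw [WithTop.add_lt_top] at h
  exact ⟨h.1.ne, h.2.ne⟩

/-- The parallelogram spanned by two steps of a chain. -/
theorem StepChain.two_step {n : ℕ} {f : (Fin n → ℤ) → WithTop ℝ}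
    (hf : ∀ x y, linf (x - y) = 2 → DMCPair f x y) {v : ℕ → Fin n → ℤ} {a b : ℕ} (hab : a < b)
    (hv : StepChain {a, b} v) (x : Fin n → ℤ) :
    f (x + v a) + f (x + v b) ≤ f x + f (x + v a + v b) := by
  have hnorm : linf (x - (x + v a + v b)) = 2 := by
    apply le_antisymm
    · refine Finset.sup_le fun i _ => ?_
      have h₁ := hv.bound i a (by simp)
      have h₂ := hv.bound i b (by simp)
      simp only [Pi.sub_apply, Pi.add_apply]
      omega
    · have := hv.two_le_linf (by rw [Finset.card_pair hab.ne]) x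
      rwa [Finset.sum_pair hab.ne, ← add_assoc] at this
  have hclose := avg_eq_of_close (x := x) (d := v a) (e := v b) rfl fun i => by
    have h₁ := hv.bound i a (by simp)
    have h₂ := hv.bound i b (by simp)
    have h₃ := hv.mono i a (by simp) b (by simp) hab.le
    rcases hv.sign i with hs | hs <;> have s₁ := hs a (by simp) <;> have s₂ := hs b (by simp) <;>
      omega
  have h := hf _ _ hnorm
  rw [DMCPair, hclose.1, hclose.2, add_comm] at h
  exact h

/-- The parallelogram inequality along a chain of steps. -/
theorem StepChain.parallelogram {n : ℕ} {f : (Fin n → ℤ) → WithTop ℝ}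
    (hdom : DMCSet (effDom f)) (hf : ∀ x y, linf (x - y) = 2 → DMCPair f x y)
    {v : ℕ → Fin n → ℤ} {I J : Finset ℕ} (hv : StepChain (I ∪ J) v) (hIJ : Disjoint I J)
    {x : Fin n → ℤ} (hx : x ∈ effDom f) :
    f (x + ∑ i ∈ I, v i) + f (x + ∑ j ∈ J, v j) ≤ f x + f (x + ∑ k ∈ I ∪ J, v k) := by
  by_cases hy : x + ∑ k ∈ I ∪ J, v k ∈ effDom f
  swap
  · rw [effDom, Set.mem_ofPred_eq, not_not] at hy
    simp [hy]
  have hfin : ∀ K ⊆ I ∪ J, f (x + ∑ k ∈ K, v k) = ((f (x + ∑ k ∈ K, v k)).untopD 0 : ℝ) :=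
    fun K hK => by
      have hK' : f (x + ∑ k ∈ K, v k) ≠ ⊤ :=
        (hdom.closedUnderChains (I ∪ J).card).finset hv hx hy hK
      obtain ⟨t, ht⟩ := WithTop.ne_top_iff_exists.1 hK'
      rw [← ht]; rfl
  have hlocal : ∀ K ⊆ I ∪ J, ∀ a ∈ I ∪ J, ∀ b ∈ I ∪ J, a ∉ K → b ∉ K → a < b →
      (f (x + ∑ k ∈ insert a K, v k)).untopD 0 + (f (x + ∑ k ∈ insert b K, v k)).untopD 0 ≤
      (f (x + ∑ k ∈ K, v k)).untopD 0 +
        (f (x + ∑ k ∈ insert a (insert b K), v k)).untopD 0 := by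
    intro K hK a ha b hb haK hbK hab
    have haK' : a ∉ insert b K := by simp [haK, hab.ne]
    have h := (hv.subset (L := {a, b}) (by
      simp only [Finset.insert_subset_iff, Finset.singleton_subset_iff]
      exact ⟨ha, hb⟩)).two_step hf hab (x + ∑ k ∈ K, v k)
    have e₁ : x + ∑ k ∈ K, v k + v a = x + ∑ k ∈ insert a K, v k := by
      rw [Finset.sum_insert haK]; abel
    have e₂ : x + ∑ k ∈ K, v k + v b = x + ∑ k ∈ insert b K, v k := by
      rw [Finset.sum_insert hbK]; abel
    have e₃ : x + ∑ k ∈ K, v k + v a + v b = x + ∑ k ∈ insert a (insert b K), v k := by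
      rw [Finset.sum_insert haK', Finset.sum_insert hbK]; abel
    rw [e₃, e₁, e₂, hfin K hK, hfin _ (Finset.insert_subset ha hK),
      hfin _ (Finset.insert_subset hb hK),
      hfin _ (Finset.insert_subset ha (Finset.insert_subset hb hK))] at h
    exact_mod_cast h
  have hsuper := supermodular_of_local (G := fun K => (f (x + ∑ k ∈ K, v k)).untopD 0)
    (U := I ∪ J) (fun K hK a ha b hb haK hbK hab => by
      rcases hab.lt_or_gt with h | h
      · exact hlocal K hK a ha b hb haK hbK h
      · have := hlocal K hK b hb a ha hbK haK h
        rw [Finset.insert_comm a b]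
        linarith) Finset.subset_union_left Finset.subset_union_right hIJ
  have h₀ := hfin ∅ (Finset.empty_subset _)
  simp only [Finset.sum_empty, add_zero] at h₀ hsuper
  rw [hfin I Finset.subset_union_left, hfin J Finset.subset_union_right, hfin _ subset_rfl, h₀]
  exact_mod_cast hsuper

theorem stepChain_chi {n m : ℕ} (hm : 1 ≤ m) {A B : ℕ → Finset (Fin n)}
    (hA : ∀ k, 1 ≤ k → k < m → A k ⊆ A (k + 1))
    (hB : ∀ k, 1 ≤ k → k < m → B (k + 1) ⊆ B k)
    (hAB : A m ∩ B 1 = ∅) (hne : (A 1 ∪ B m).Nonempty) :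
    StepChain (Finset.Icc 1 m) fun k => chi (A k) - chi (B k) := by
  have hA' : ∀ j k, 1 ≤ j → j ≤ k → k ≤ m → A j ⊆ A k := by
    intro j k hj hjk
    induction k, hjk using Nat.le_induction with
    | base => exact fun _ => subset_rfl
    | succ k hjk ih => exact fun hk => (ih (by omega)).trans (hA k (by omega) (by omega))
  have hB' : ∀ j k, 1 ≤ j → j ≤ k → k ≤ m → B k ⊆ B j := by
    intro j k hj hjk
    induction k, hjk using Nat.le_induction with
    | base => exact fun _ => subset_rfl
    | succ k hjk ih => exact fun hk => (hB k (by omega) (by omega)).trans (ih (by omega))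
  have hdisj : ∀ i, i ∈ A m → i ∉ B 1 := fun i h₁ h₂ => by
    have := Finset.mem_inter.2 ⟨h₁, h₂⟩
    simp [hAB] at this
  refine ⟨fun i j hj k hk hjk => ?_, fun i k hk => ?_, fun i => ?_, ?_⟩
  · have h₁ := @hA' j k (by simp_all) hjk (by simp_all) i
    have h₂ := @hB' j k (by simp_all) hjk (by simp_all) i
    simp only [chi, Pi.sub_apply]
    split_ifs <;> simp_all
  · simp only [chi, Pi.sub_apply]
    split_ifs <;> simp
  · by_cases hi : i ∈ A m
    · refine Or.inl fun k hk => ?_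
      have := fun h => hdisj i hi (hB' 1 k le_rfl (by simp_all) (by simp_all) h)
      simp only [chi, Pi.sub_apply, if_neg this]
      split_ifs <;> simp
    · refine Or.inr fun k hk => ?_
      have := fun h => hi (hA' k m (by simp_all) (by simp_all) le_rfl h)
      simp only [chi, Pi.sub_apply, if_neg this]
      split_ifs <;> simp
  · obtain ⟨i, hi⟩ := hne
    refine ⟨i, (Finset.mem_union.1 hi).imp (fun h k hk => ?_) (fun h k hk => ?_)⟩
    · have h₁ := hA' 1 k le_rfl (by simp_all) (by simp_all) h
      have h₂ : i ∉ B k := fun h' => hdisj i (hA' 1 m le_rfl hm le_rfl h)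
        (hB' 1 k le_rfl (by simp_all) (by simp_all) h')
      simp [chi, h₁, h₂]
    · have h₁ := hB' k m (by simp_all) (by simp_all) le_rfl h
      have h₂ : i ∉ A k := fun h' => hdisj i (hA' k m (by simp_all) (by simp_all) le_rfl h')
        (hB' 1 m le_rfl hm le_rfl h)
      simp [chi, h₁, h₂]

/-- Parallelogram inequality for (globally or locally) discrete midpoint convex
functions. -/
theorem parallelogram_inequality {n : ℕ} (f : (Fin n → ℤ) → WithTop ℝ)
    (hdmc : GloballyDMC f ∨ LocallyDMC f)
    (x : Fin n → ℤ) (hx : x ∈ effDom f)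
    (m : ℕ) (hm : 1 ≤ m)
    (A B : ℕ → Finset (Fin n))
    (hA : ∀ k, 1 ≤ k → k < m → A k ⊆ A (k + 1))
    (hB : ∀ k, 1 ≤ k → k < m → B (k + 1) ⊆ B k)
    (hAB : A m ∩ B 1 = ∅)
    (hne : (A 1 ∪ B m).Nonempty)
    (I J : Finset ℕ) (hIJ : Disjoint I J) (hIJu : I ∪ J = Finset.Icc 1 m)
    (d₁ d₂ : Fin n → ℤ)
    (hd₁ : d₁ = ∑ i ∈ I, (chi (A i) - chi (B i)))
    (hd₂ : d₂ = ∑ j ∈ J, (chi (A j) - chi (B j))) :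
    f (x + d₁) + f (x + d₂) ≤ f x + f (x + d₁ + d₂) := by
  have hv := stepChain_chi hm hA hB hAB hne
  rw [← hIJu] at hv
  have hdom : DMCSet (effDom f) := hdmc.elim (fun h => h.dmcSet_effDom) (fun h => h.1)
  have hf : ∀ x y, linf (x - y) = 2 → DMCPair f x y :=
    hdmc.elim (fun h x y hxy => h x y hxy.ge) (fun h => h.2)
  have h := hv.parallelogram hdom hf hIJ hx
  rwa [Finset.sum_union hIJ, ← add_assoc, ← hd₁, ← hd₂] at h
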